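/- Let I and P be positive integers, let η, L > 0 satisfy η ≤ 1/(60·L·I·P), and set q₁ = 18·η²·L²·I and q₂ = 15·η²·L²·I·P. Fix an integer s with 0 ≤ s ≤ P−1 and define α_{s,t} for s·I ≤ t ≤ I·P by: α_{s,t} = 0 whenever t is a multiple of I, and for t with t+1 not a multiple of I, α_{s,t+1} = (1 + 1/I)·α_{s,t} + q₁·P·((1 + 1/(I·P))^{j(s,t)} − 1)·(1 + 1/(I·P))^{ℓ(s,t)} + q₁·q₂·Σ_{i=0}^{t−s·I−2} (1 + 1/(I·P))^i·α_{s,t−1−i} (empty sums being zero). Then α_{s,t} ≤ 36·q₁·I·P for all s·I ≤ t ≤ I·P. -/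

import Mathlib

open Finset

lemma aux_pow_le (n k : ℕ) (hn : 0 < n) (hk : k ≤ n) : (1 + 1 / (n : ℝ)) ^ k ≤ 3 := by
  have hn' : (0 : ℝ) < n := by exact_mod_cast hn
  have h1 : (1 : ℝ) + 1 / (n : ℝ) ≤ Real.exp (1 / n) := by
    have := Real.add_one_le_exp (1 / (n : ℝ)); linarith
  have h1' : (1 : ℝ) ≤ 1 + 1 / (n : ℝ) := by
    have : (0 : ℝ) ≤ 1 / (n : ℝ) := by positivity
    linarith
  calc (1 + 1 / (n : ℝ)) ^ k ≤ (1 + 1 / (n : ℝ)) ^ n := pow_le_pow_right₀ h1' hk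
    _ ≤ (Real.exp (1 / n)) ^ n := by gcongr
    _ = Real.exp 1 := by
      rw [← Real.exp_nat_mul]; congr 1; field_simp
    _ ≤ 3 := by have := Real.exp_one_lt_d9; linarith

lemma aux_pow_sub (x : ℝ) (hx : 0 ≤ x) (j : ℕ) :
    (1 + x) ^ j - 1 ≤ j * x * (1 + x) ^ j := by
  induction j with
  | zero => simp
  | succ j ih =>
    have h0 : 0 ≤ (1 + x) ^ j := by positivity
    have h1 : (0 : ℝ) ≤ j := by positivity
    have h2 := mul_nonneg (mul_nonneg (mul_nonneg h1 hx) h0) hx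
    have h3 := mul_nonneg (mul_nonneg hx h0) hx
    push_cast
    rw [pow_succ]
    nlinarith


/-- Bound on the auxiliary coefficients `α_{s,t}` from the proof of Lemma 1
(Amplified SCAFFOLD).  Here `j(s,t) = min I (t - s*I)` and `ℓ(s,t) = t - (s+1)*I`
(truncated subtraction on ℕ realizes `max{0, ·}`). -/
theorem alpha_coefficient_bound
    (I P : ℕ) (hI : 0 < I) (hP : 0 < P)
    (η L : ℝ) (hη : 0 < η) (hL : 0 < L)
    (hηle : η ≤ 1 / (60 * L * I * P))
    (q₁ q₂ : ℝ)
    (hq₁ : q₁ = 18 * η ^ 2 * L ^ 2 * I)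
    (hq₂ : q₂ = 15 * η ^ 2 * L ^ 2 * I * P)
    (s : ℕ) (hs : s < P)
    (α : ℕ → ℝ)
    (hα0 : ∀ t, s * I ≤ t → t ≤ I * P → I ∣ t → α t = 0)
    (hαrec : ∀ t, s * I ≤ t → t + 1 ≤ I * P → ¬ I ∣ (t + 1) →
      α (t + 1) = (1 + 1 / (I : ℝ)) * α t
        + q₁ * P * ((1 + 1 / ((I : ℝ) * P)) ^ (min I (t - s * I)) - 1)
            * (1 + 1 / ((I : ℝ) * P)) ^ (t - (s + 1) * I)
        + q₁ * q₂ * ∑ i ∈ Finset.range (t - s * I - 1),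
            (1 + 1 / ((I : ℝ) * P)) ^ i * α (t - 1 - i)) :
    ∀ t, s * I ≤ t → t ≤ I * P → α t ≤ 36 * q₁ * I * P := by
  have hI' : (1 : ℝ) ≤ I := by exact_mod_cast hI
  have hP' : (1 : ℝ) ≤ P := by exact_mod_cast hP
  have hI0 : (0 : ℝ) < I := by linarith
  have hP0 : (0 : ℝ) < P := by linarith
  have hN : 0 < I * P := Nat.mul_pos hI hP
  have hu : η * L * I * P ≤ 1 / 60 := by
    rw [le_div_iff₀ (by positivity)] at hηle
    linarith
  have hu0 : 0 < η * L * I * P := by positivity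
  have hu2 : (η * L * I * P) ^ 2 ≤ 1 / 3600 := by nlinarith
  have hq1p : 0 < q₁ := by rw [hq₁]; positivity
  have hq2p : 0 < q₂ := by rw [hq₂]; positivity
  have hq2N : q₂ * (I * P) ≤ 1 / 240 := by
    have : q₂ * (I * P) = 15 * (η * L * I * P) ^ 2 := by rw [hq₂]; ring
    linarith
  have hq1I : q₁ * I ≤ 1 / 200 := by
    have h1 : q₁ * I ≤ q₁ * I * P ^ 2 :=
      le_mul_of_one_le_right (by positivity) (one_le_pow₀ hP')
    have : q₁ * I * P ^ 2 = 18 * (η * L * I * P) ^ 2 := by rw [hq₁]; ring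
    linarith
  have hrN : ∀ k, k ≤ I * P → (1 + 1 / ((I : ℝ) * P)) ^ k ≤ 3 := by
    intro k hk
    have := aux_pow_le (I * P) k hN hk
    push_cast at this
    exact this
  have hM : ∀ t, 4 * q₁ * I * ((1 + 1 / (I : ℝ)) ^ (t % I) - 1) ≤ 8 * q₁ * I := by
    intro t
    have := aux_pow_le I (t % I) hI (Nat.mod_lt t hI).le
    have h2 : 0 < q₁ * I := by positivity
    nlinarith
  have key : ∀ t, s * I ≤ t → t ≤ I * P →
      α t ≤ 4 * q₁ * I * ((1 + 1 / (I : ℝ)) ^ (t % I) - 1) := by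
    intro t
    induction t using Nat.strong_induction_on with
    | _ t ih =>
    intro h1 h2
    by_cases hd : I ∣ t
    · rw [hα0 t h1 h2 hd, Nat.mod_eq_zero_of_dvd hd]; simp
    · obtain ⟨m, rfl⟩ : ∃ m, t = m + 1 := by
        cases t with
        | zero => exact absurd (dvd_zero I) hd
        | succ m => exact ⟨m, rfl⟩
      have hsm : s * I ≤ m := by
        rcases Nat.lt_or_ge m (s * I) with h | h
        · have : m + 1 = s * I := by omega
          exact absurd (this ▸ Dvd.intro_left s rfl) hd
        · exact h
      have hmod : (m + 1) % I = m % I + 1 := by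
        have e := Nat.div_add_mod m I
        have hlt := Nat.mod_lt m hI
        have hne : m % I + 1 ≠ I := by
          intro h
          apply hd
          refine ⟨m / I + 1, ?_⟩
          rw [Nat.mul_add, Nat.mul_one]
          omega
        have e2 : m + 1 = I * (m / I) + (m % I + 1) := by omega
        calc (m + 1) % I = (I * (m / I) + (m % I + 1)) % I := by rw [← e2]
          _ = m % I + 1 := by
            rw [Nat.mul_add_mod]
            exact Nat.mod_eq_of_lt (by omega)
      have ihm := ih m (by omega) hsm (by omega)
      rw [hαrec m hsm h2 hd, hmod]
      -- forcing
      have hx0 : (0 : ℝ) ≤ 1 / ((I : ℝ) * P) := by positivity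
      have hF : q₁ * P * ((1 + 1 / ((I : ℝ) * P)) ^ (min I (m - s * I)) - 1)
            * (1 + 1 / ((I : ℝ) * P)) ^ (m - (s + 1) * I) ≤ 3 * q₁ := by
        have ha := aux_pow_sub (1 / ((I : ℝ) * P)) hx0 (min I (m - s * I))
        have hj : ((min I (m - s * I) : ℕ) : ℝ) ≤ I := by exact_mod_cast min_le_left _ _
        have hb := hrN (min I (m - s * I) + (m - (s + 1) * I)) (by
          have : (s + 1) * I = s * I + I := by ring
          omega)
        rw [pow_add] at hb
        calc _ ≤ q₁ * P * (I * (1 / ((I : ℝ) * P)) * (1 + 1 / ((I : ℝ) * P)) ^ (min I (m - s * I)))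
              * (1 + 1 / ((I : ℝ) * P)) ^ (m - (s + 1) * I) := by
              gcongr
              refine ha.trans ?_
              gcongr
          _ = q₁ * ((1 + 1 / ((I : ℝ) * P)) ^ (min I (m - s * I))
              * (1 + 1 / ((I : ℝ) * P)) ^ (m - (s + 1) * I)) := by
              have : (P : ℝ) * (I * (1 / ((I : ℝ) * P))) = 1 := by field_simp
              linear_combination (q₁ * ((1 + 1 / ((I : ℝ) * P)) ^ (min I (m - s * I))
              * (1 + 1 / ((I : ℝ) * P)) ^ (m - (s + 1) * I))) * this
          _ ≤ q₁ * 3 := by gcongr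
          _ = 3 * q₁ := by ring
      have hS : ∑ i ∈ Finset.range (m - s * I - 1),
            (1 + 1 / ((I : ℝ) * P)) ^ i * α (m - 1 - i) ≤ (I * P) * (3 * (8 * q₁ * I)) := by
        have h8 : 0 ≤ 8 * q₁ * I := by positivity
        have hb : ∀ i ∈ Finset.range (m - s * I - 1),
            (1 + 1 / ((I : ℝ) * P)) ^ i * α (m - 1 - i) ≤ 3 * (8 * q₁ * I) := by
          intro i hi
          rw [Finset.mem_range] at hi
          have hA := (ih (m - 1 - i) (by omega) (by omega) (by omega)).trans (hM _)
          calc _ ≤ (1 + 1 / ((I : ℝ) * P)) ^ i * (8 * q₁ * I) := by gcongr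
            _ ≤ _ := by
              have := hrN i (by omega)
              gcongr
        have := Finset.sum_le_card_nsmul _ _ _ hb
        rw [Finset.card_range, nsmul_eq_mul] at this
        refine this.trans ?_
        have hc : ((m - s * I - 1 : ℕ) : ℝ) ≤ I * P := by
          have : m - s * I - 1 ≤ I * P := by omega
          exact_mod_cast this
        gcongr
      have hS2 : q₁ * q₂ * ∑ i ∈ Finset.range (m - s * I - 1),
            (1 + 1 / ((I : ℝ) * P)) ^ i * α (m - 1 - i) ≤ q₁ := by
        have hq12 : 0 ≤ q₁ * q₂ := by positivity
        have e1 := mul_le_mul_of_nonneg_left hS hq12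
        have e2 : (q₂ * (I * P)) * (q₁ * I) ≤ 1 / 240 * (1 / 200) := by gcongr
        have e3 := mul_le_mul_of_nonneg_left e2 hq1p.le
        nlinarith
      have hA : (1 + 1 / (I : ℝ)) * α m ≤
          (1 + 1 / (I : ℝ)) * (4 * q₁ * I * ((1 + 1 / (I : ℝ)) ^ (m % I) - 1)) := by gcongr
      have hE : 4 * q₁ * I * ((1 + 1 / (I : ℝ)) ^ (m % I + 1) - 1) =
          (1 + 1 / (I : ℝ)) * (4 * q₁ * I * ((1 + 1 / (I : ℝ)) ^ (m % I) - 1)) + 4 * q₁ := by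
        have : (I : ℝ) * (1 / I) = 1 := by field_simp
        rw [pow_succ]
        linear_combination (4 * q₁) * this
      linarith
  intro t h1 h2
  refine ((key t h1 h2).trans (hM t)).trans ?_
  have h2 : 0 < q₁ * I := by positivity
  nlinarith
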